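/- Let a be an object and u, v ∈ Hom(−, a). Then J(u) ∪ J(v) = J(u ∧ v) ∪ J(u⁻¹v), where ∧ is the meet in the weak order and J(w) is the set of letters appearing in any reduced decomposition of w. -/

import Mathlib

/-!
A letter `i` is missing from `J(w)` exactly when `w` preserves the `i`-th coordinate of every
vector (`notMem_Jset_iff`): a word avoiding `i` clearly does, and a reduced word containing `i`
inverts a positive root in a way that changes the coordinate. With this description the inclusion
of `J(m) ∪ J(z)` in `J(u) ∪ J(v)` is immediate, as `z = u⁻¹v` and `m` is a left factor of `u` with
additive lengths.

For the other inclusion, let `i` be missing from `J(m)` and `J(z)`. Then `u` and `v = uz` lie in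
one coset modulo the parabolic subgroupoid of the words avoiding `i`. The minimal representative
`x` of that coset lies below each of its elements in the weak order (`exists_coset_min`), so
`x ≤ m` and `i` is missing from `J(x)`; since `u` and `v` differ from `x` by factors avoiding `i`,
it is missing from `J(u)` and `J(v)`.

Both facts rest on the sign criterion for the length (`ascent_nonneg`, `Red.nonneg`, `Red.cons`):
multiplying by `σ_i` lengthens a morphism if and only if the morphism keeps `α_i` positive. The
deletion condition fails for Weyl groupoids, so this is reduced to rank two, where alternating
words invert one more plane root per letter until all `m` of them are inverted, and the two
alternating words of length `m` agree (`altWord_eqv`). The equality of their targets is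
axiom (R4). Their maps agree because the quotient of the two has even length and maps the positive
plane roots to positive ones, which forces it to be the identity (`wordMap_eq_id`).

Words are read with a fixed source `a` and grow at the front. A morphism with target `a` is
therefore encoded by a word for its inverse, see `ofWord` and `invMap`; the weak order then
corresponds to prepending letters.
-/

set_option linter.unusedSectionVars false

/-- A Cartan scheme `C = C(I, A, (ρ_i), (C^a))`. -/
structure CartanScheme (I A : Type) [Fintype I] [DecidableEq I] [Fintype A] [Nonempty A] where
  ρ : I → A → A
  c : A → I → I → ℤ
  ρ_invol : ∀ i a, ρ i (ρ i a) = a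
  c_diag : ∀ a i, c a i i = 2
  c_offdiag_nonpos : ∀ a i j, i ≠ j → c a i j ≤ 0
  c_zero_symm : ∀ a i j, c a i j = 0 → c a j i = 0
  c_rho : ∀ a i j, c (ρ i a) i j = c a i j

namespace CartanScheme

variable {I A : Type} [Fintype I] [DecidableEq I] [Fintype A] [Nonempty A] [DecidableEq A]
variable (C : CartanScheme I A)

/-- The simple reflection `σ_i^a` as a map `ℤ^I → ℤ^I`, `σ_i^a(α_j) = α_j - c^a_{ij} α_i`. -/
def sigma (a : A) (i : I) : (I → ℤ) → (I → ℤ) :=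
  fun v k => v k - (if k = i then ∑ j, C.c a i j * v j else 0)

/-- Target object of the word `[i_1, …, i_k]` read at source object `a`:
`ρ_{i_1} ⋯ ρ_{i_k}(a)`. -/
def wordTarget (a : A) : List I → A
  | [] => a
  | i :: l => C.ρ i (wordTarget a l)

/-- The map `σ_{i_1} ⋯ σ_{i_k}^a : ℤ^I → ℤ^I` determined by a word with source `a`. -/
def wordMap (a : A) : List I → ((I → ℤ) → (I → ℤ))
  | [] => id
  | i :: l => C.sigma (C.wordTarget a l) i ∘ wordMap a l

theorem wordTarget_append (a : A) (l₁ l₂ : List I) :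
    C.wordTarget a (l₁ ++ l₂) = C.wordTarget (C.wordTarget a l₂) l₁ := by
  induction l₁ with
  | nil => rfl
  | cons i l ih => simp [wordTarget, ih]

theorem wordMap_append (a : A) (l₁ l₂ : List I) :
    C.wordMap a (l₁ ++ l₂) = C.wordMap (C.wordTarget a l₂) l₁ ∘ C.wordMap a l₂ := by
  induction l₁ with
  | nil => rfl
  | cons i l ih => simp [wordMap, ih, wordTarget_append, Function.comp_assoc]

/-- A morphism of the Weyl groupoid `W(C)`: a source object, a target object, and a map
`ℤ^I → ℤ^I` which is a composition of simple reflections along some word. -/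
@[ext]
structure Mor where
  src : A
  tgt : A
  toFun : (I → ℤ) → (I → ℤ)
  spec : ∃ l : List I, C.wordTarget src l = tgt ∧ C.wordMap src l = toFun

variable {C}

/-- A word realizes a morphism. -/
def Realizes (w : Mor C) (l : List I) : Prop :=
  C.wordTarget w.src l = w.tgt ∧ C.wordMap w.src l = w.toFun

variable (C)

/-- The identity morphism `id^a`. -/
def idMor (a : A) : Mor C := ⟨a, a, id, ⟨[], rfl, rfl⟩⟩

/-- The generator `σ_i^a ∈ Hom(a, ρ_i(a))`. -/
def genMor (i : I) (a : A) : Mor C :=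
  ⟨a, C.ρ i a, C.sigma a i, ⟨[i], rfl, Function.comp_id _⟩⟩

/-- The simple reflection with target `a`, i.e. `id^a σ_i = σ_i^{ρ_i(a)} ∈ Hom(ρ_i(a), a)`. -/
def sgen (a : A) (i : I) : Mor C :=
  { src := C.ρ i a, tgt := a, toFun := C.sigma (C.ρ i a) i,
    spec := ⟨[i], by simp [wordTarget, C.ρ_invol], Function.comp_id _⟩ }

variable {C}

/-- Composition `u ∘ v` (with `v` applied first); junk value `u` if not composable. -/
def Mor.comp (u v : Mor C) : Mor C :=
  if h : v.tgt = u.src then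
    { src := v.src, tgt := u.tgt, toFun := u.toFun ∘ v.toFun,
      spec := by
        obtain ⟨lu, hu1, hu2⟩ := u.spec
        obtain ⟨lv, hv1, hv2⟩ := v.spec
        refine ⟨lu ++ lv, ?_, ?_⟩
        · rw [C.wordTarget_append, hv1, h, hu1]
        · rw [C.wordMap_append, hv1, h, hu2, hv2] }
  else u

/-- Length of a morphism: minimal length of a realizing word. -/
noncomputable def len (w : Mor C) : ℕ := sInf {k | ∃ l : List I, Realizes w l ∧ l.length = k}

/-- A reduced decomposition. -/
def IsReduced (w : Mor C) (l : List I) : Prop := Realizes w l ∧ l.length = len w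

/-- The (right) weak order: `u ≤_R uv` iff `ℓ(uv) = ℓ(u) + ℓ(v)`. -/
def weakLe (u w : Mor C) : Prop :=
  ∃ v : Mor C, v.tgt = u.src ∧ w = u.comp v ∧ len w = len u + len v

/-- Membership in the parabolic subgroupoid `W_J(C)`. -/
def InParabolic (J : Set I) (w : Mor C) : Prop :=
  ∃ l : List I, (∀ i ∈ l, i ∈ J) ∧ Realizes w l

/-- Length with respect to the generators `σ_j`, `j ∈ J`. -/
noncomputable def lenPar (J : Set I) (w : Mor C) : ℕ :=
  sInf {k | ∃ l : List I, (∀ i ∈ l, i ∈ J) ∧ Realizes w l ∧ l.length = k}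

/-- The set of letters occurring in some reduced decomposition of `w`;
by the theorem on reduced decompositions this is the set `J(w)`. -/
def Jset (w : Mor C) : Set I := {i | ∃ l : List I, IsReduced w l ∧ i ∈ l}

variable (C)

/-- The set of real roots at the object `a`. -/
def roots (a : A) : Set (I → ℤ) :=
  {α | ∃ (b : A) (l : List I) (j : I),
    C.wordTarget b l = a ∧ α = C.wordMap b l (Pi.single j 1)}

/-- The set of positive (real) roots at `a`. -/
def posRoots (a : A) : Set (I → ℤ) := {α ∈ C.roots a | ∀ i, 0 ≤ α i}

/-- `R^re(C)` is a finite root system of type `C`: axioms (R1), (R2), (R4) and finiteness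
((R3) holds automatically for real roots). -/
def IsFRS : Prop :=
  (∀ a : A, (C.roots a).Finite) ∧
  (∀ (a : A) (α : I → ℤ), α ∈ C.roots a → (∀ i, 0 ≤ α i) ∨ (∀ i, α i ≤ 0)) ∧
  (∀ (a : A) (i : I) (α : I → ℤ), α ∈ C.roots a → (∃ z : ℤ, α = z • Pi.single i 1) →
    α = Pi.single i 1 ∨ α = -Pi.single i 1) ∧
  (∀ (a : A) (i j : I), i ≠ j →
    (fun x => C.ρ i (C.ρ j x))^[(C.roots a ∩
      {α | ∃ m n : ℕ, α = (m : ℤ) • Pi.single i 1 + (n : ℤ) • Pi.single j 1}).ncard] a = a)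

variable {C}

/-- `I_L(w)`: the set of simple reflections with target `w.tgt` below `w` in weak order. -/
def IL (w : Mor C) : Set I := {i | weakLe (sgen C w.tgt i) w}

/-- `m` is the longest element of `Hom(-,a) ∩ W_J(C)`, i.e. `w_J` at the object `a`. -/
def IsLongestPar (a : A) (J : Set I) (m : Mor C) : Prop :=
  m.tgt = a ∧ InParabolic J m ∧
    ∀ x : Mor C, x.tgt = a → InParabolic J x → weakLe x m

/-- `m` is the longest element `w_I` of `Hom(-,a)`. -/
def IsLongestAt (a : A) (m : Mor C) : Prop :=
  m.tgt = a ∧ ∀ x : Mor C, x.tgt = a → weakLe x m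

/-- `z` is the meet of `x` and `y` in `(Hom(-,a), ≤_R)`. -/
def IsMeet (a : A) (x y z : Mor C) : Prop :=
  z.tgt = a ∧ weakLe z x ∧ weakLe z y ∧
    ∀ t : Mor C, t.tgt = a → weakLe t x → weakLe t y → weakLe t z

/-- `z` is the join of `x` and `y` in `(Hom(-,a), ≤_R)`. -/
def IsJoin (a : A) (x y z : Mor C) : Prop :=
  z.tgt = a ∧ weakLe x z ∧ weakLe y z ∧
    ∀ t : Mor C, t.tgt = a → weakLe x t → weakLe y t → weakLe z t

/-- The left coset `u W_J(C) ⊆ Hom(-, u.tgt)`. -/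
def leftCoset (u : Mor C) (J : Set I) : Set (Mor C) :=
  {x | ∃ v : Mor C, InParabolic J v ∧ v.tgt = u.src ∧ x = u.comp v}

end CartanScheme

variable {I A : Type} [Fintype I] [DecidableEq I] [Fintype A] [Nonempty A] [DecidableEq A]

open CartanScheme

namespace CartanScheme

/-! ### Words, inverse maps and equivalence of words -/

/-- The simple root `α_i`, i.e. the `i`-th standard basis vector of `ℤ^I`. -/
abbrev sr (i : I) : I → ℤ := Pi.single i 1

section basics

variable {C : CartanScheme I A}

theorem sigma_apply_ne (a : A) {i k : I} (h : k ≠ i) (v : I → ℤ) : C.sigma a i v k = v k := by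
  simp [sigma, h]

theorem sigma_sr (a : A) (i : I) : C.sigma a i (sr i) = -sr i := by
  funext k
  by_cases h : k = i
  · subst h
    simp [sigma, Pi.single_apply, C.c_diag]
  · simp [sigma, h]

theorem sigma_sigma (a : A) (i : I) (v : I → ℤ) : C.sigma a i (C.sigma a i v) = v := by
  funext k
  by_cases h : k = i
  · subst h
    simp only [sigma, if_true, mul_sub, Finset.sum_sub_distrib, mul_ite, mul_zero,
      Finset.sum_ite_eq', Finset.mem_univ, C.c_diag]
    ring
  · simp [sigma, h]

theorem sigma_rho (a : A) (i : I) : C.sigma (C.ρ i a) i = C.sigma a i := by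
  funext v k
  simp [sigma, C.c_rho]

theorem sigma_add (a : A) (i : I) (v w : I → ℤ) :
    C.sigma a i (v + w) = C.sigma a i v + C.sigma a i w := by
  funext k
  by_cases h : k = i
  · simp only [sigma, h, if_true, Pi.add_apply, mul_add, Finset.sum_add_distrib]
    ring
  · simp [sigma, h]

theorem sigma_smul (a : A) (i : I) (n : ℤ) (v : I → ℤ) :
    C.sigma a i (n • v) = n • C.sigma a i v := by
  funext k
  by_cases h : k = i
  · simp only [sigma, h, if_true, Pi.smul_apply, smul_eq_mul, mul_sub, Finset.mul_sum]
    congr 1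
    exact Finset.sum_congr rfl fun j _ => by ring
  · simp [sigma, h]

theorem wordMap_isLinear (a : A) (l : List I) : IsLinearMap ℤ (C.wordMap a l) := by
  induction l with
  | nil => exact ⟨fun _ _ => rfl, fun _ _ => rfl⟩
  | cons i l ih =>
    refine ⟨fun x y => ?_, fun n x => ?_⟩
    · simp [wordMap, ih.map_add, sigma_add]
    · simp only [wordMap, Function.comp_apply, ih.map_smul, sigma_smul]

theorem wordMap_neg (a : A) (l : List I) (x : I → ℤ) :
    C.wordMap a l (-x) = -C.wordMap a l x := (wordMap_isLinear a l).map_neg x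

/-- Coordinate `i` is untouched by a word that avoids the letter `i`. -/
theorem wordMap_coord (a : A) (l : List I) {i : I} (h : i ∉ l) (x : I → ℤ) :
    C.wordMap a l x i = x i := by
  induction l with
  | nil => rfl
  | cons j l ih =>
    simp only [List.mem_cons, not_or] at h
    simp only [wordMap, Function.comp_apply, sigma_apply_ne _ h.1, ih h.2]

theorem wordMap_eq_sum (a : A) (l : List I) (x : I → ℤ) :
    C.wordMap a l x = ∑ k, x k • C.wordMap a l (sr k) := by
  have e1 : x = ∑ k, x k • (sr k : I → ℤ) := by
    funext j
    simp [Finset.sum_apply, Pi.single_apply]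
  have := map_sum (wordMap_isLinear (C := C) a l).mk' (fun k => x k • (sr k : I → ℤ)) Finset.univ
  rw [← e1] at this
  simp only [IsLinearMap.mk'_apply] at this
  rw [this]
  exact Finset.sum_congr rfl fun k _ => (wordMap_isLinear a l).map_smul _ _

theorem wordMap_nonneg (a : A) (l : List I) {x : I → ℤ} (hx : 0 ≤ x)
    (h : ∀ k, x k ≠ 0 → 0 ≤ C.wordMap a l (sr k)) : 0 ≤ C.wordMap a l x := by
  rw [wordMap_eq_sum]
  refine Finset.sum_nonneg fun k _ => ?_
  by_cases hk : x k = 0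
  · simp [hk]
  · exact smul_nonneg (hx k) (h k hk)

theorem wordMap_nonpos (a : A) (l : List I) {x : I → ℤ} (hx : 0 ≤ x)
    (h : ∀ k, x k ≠ 0 → C.wordMap a l (sr k) ≤ 0) : C.wordMap a l x ≤ 0 := by
  rw [wordMap_eq_sum]
  refine Finset.sum_nonpos fun k _ => ?_
  by_cases hk : x k = 0
  · simp [hk]
  · exact smul_nonpos_of_nonneg_of_nonpos (hx k) (h k hk)

variable (C) in
/-- The inverse of `wordMap a l`, realized by the reversed word. -/
def invMap (a : A) (l : List I) : (I → ℤ) → (I → ℤ) :=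
  C.wordMap (C.wordTarget a l) l.reverse

theorem invMap_nil (a : A) : C.invMap a [] = id := rfl

theorem invMap_cons (a : A) (i : I) (l : List I) :
    C.invMap a (i :: l) = C.invMap a l ∘ C.sigma (C.wordTarget a l) i := by
  simp [invMap, wordMap_append, wordTarget, wordMap, C.ρ_invol, sigma_rho]

theorem invMap_append (a : A) (s l : List I) :
    C.invMap a (s ++ l) = C.invMap a l ∘ C.invMap (C.wordTarget a l) s := by
  induction s with
  | nil => rfl
  | cons i s ih =>
    simp only [List.cons_append, invMap_cons, ih, wordTarget_append, Function.comp_assoc]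

theorem wordTarget_reverse (a : A) (l : List I) :
    C.wordTarget (C.wordTarget a l) l.reverse = a := by
  induction l with
  | nil => rfl
  | cons i l ih => simp [wordTarget_append, wordTarget, C.ρ_invol, ih]

theorem invMap_wordMap (a : A) (l : List I) (x : I → ℤ) :
    C.invMap a l (C.wordMap a l x) = x := by
  induction l with
  | nil => rfl
  | cons i l ih => simp [invMap_cons, wordMap, sigma_sigma, ih]

theorem wordMap_invMap (a : A) (l : List I) (x : I → ℤ) :
    C.wordMap a l (C.invMap a l x) = x := by
  induction l generalizing x with
  | nil => rfl
  | cons i l ih => simp [invMap_cons, wordMap, sigma_sigma, ih]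

theorem wordMap_injective (a : A) (l : List I) : Function.Injective (C.wordMap a l) :=
  Function.LeftInverse.injective (invMap_wordMap a l)

theorem invMap_coord (a : A) (l : List I) {i : I} (h : i ∉ l) (x : I → ℤ) :
    C.invMap a l x i = x i := wordMap_coord _ _ (by simpa using h) x

variable (C) in
/-- Two words with source `a` represent the same morphism. -/
def Eqv (a : A) (l l' : List I) : Prop :=
  C.wordTarget a l = C.wordTarget a l' ∧ C.wordMap a l = C.wordMap a l'

theorem Eqv.refl (a : A) (l : List I) : C.Eqv a l l := ⟨rfl, rfl⟩

theorem Eqv.symm {a : A} {l l' : List I} (h : C.Eqv a l l') : C.Eqv a l' l := ⟨h.1.symm, h.2.symm⟩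

theorem Eqv.trans {a : A} {l l' l'' : List I} (h : C.Eqv a l l') (h' : C.Eqv a l' l'') :
    C.Eqv a l l'' := ⟨h.1.trans h'.1, h.2.trans h'.2⟩

theorem Eqv.append_left {a : A} {l l' : List I} (h : C.Eqv a l l') (s : List I) :
    C.Eqv a (s ++ l) (s ++ l') := by
  simp only [Eqv, wordTarget_append, wordMap_append, h.1, h.2, and_self]

theorem Eqv.cons {a : A} {l l' : List I} (h : C.Eqv a l l') (i : I) :
    C.Eqv a (i :: l) (i :: l') := h.append_left [i]

theorem Eqv.append_right {a : A} {l s s' : List I} (h : C.Eqv (C.wordTarget a l) s s') :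
    C.Eqv a (s ++ l) (s' ++ l) := by
  simp only [Eqv, wordTarget_append, wordMap_append, h.1, h.2, and_self]

theorem Eqv.cancel (a : A) (i : I) (l : List I) : C.Eqv a (i :: i :: l) l := by
  refine ⟨by simp [wordTarget, C.ρ_invol], ?_⟩
  funext x
  simp [wordMap, wordTarget, sigma_rho, sigma_sigma]

theorem Eqv.reverse_cancel (a : A) (s l : List I) : C.Eqv a (s.reverse ++ (s ++ l)) l := by
  induction s with
  | nil => exact Eqv.refl _ _
  | cons i s ih =>
    simp only [List.reverse_cons, List.append_assoc, List.cons_append, List.nil_append]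
    exact ((Eqv.cancel a i (s ++ l)).append_left s.reverse).trans ih

theorem Eqv.invMap_eq {a : A} {l l' : List I} (h : C.Eqv a l l') :
    C.invMap a l = C.invMap a l' := by
  funext x
  apply wordMap_injective a l
  rw [wordMap_invMap, h.2, wordMap_invMap]

theorem Eqv.reverse {a : A} {l l' : List I} (h : C.Eqv a l l') :
    C.Eqv (C.wordTarget a l) l.reverse l'.reverse := by
  refine ⟨?_, ?_⟩
  · rw [wordTarget_reverse, h.1, wordTarget_reverse]
  · have := h.invMap_eq
    unfold invMap at this
    rw [this, h.1]

/-! ### Reduced words -/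

variable (C) in
/-- `l` is a shortest word among those representing the same morphism with source `a`. -/
def Red (a : A) (l : List I) : Prop := ∀ l', C.Eqv a l' l → l.length ≤ l'.length

theorem exists_red (a : A) (l : List I) : ∃ l', C.Eqv a l' l ∧ C.Red a l' := by
  obtain ⟨l', h, hmin⟩ := exists_minimalFor_of_wellFoundedLT
    (fun l' => C.Eqv a l' l) List.length ⟨l, Eqv.refl a l⟩
  refine ⟨l', h, fun l'' h'' => ?_⟩
  by_contra hlt
  exact hlt (hmin (h''.trans h) (by omega))

theorem Red.suffix {a : A} {s l : List I} (h : C.Red a (s ++ l)) : C.Red a l := by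
  intro l' hl'
  have := h _ (hl'.append_left s)
  simpa using this

theorem Red.of_append_left {a : A} {s l : List I} (h : C.Red a (s ++ l)) :
    C.Red (C.wordTarget a l) s := by
  intro s' hs'
  have := h _ hs'.append_right
  simpa using this

theorem Red.reverse {a : A} {l : List I} (h : C.Red a l) :
    C.Red (C.wordTarget a l) l.reverse := by
  intro l' hl'
  have h1 := hl'.reverse
  rw [hl'.1, wordTarget_reverse, List.reverse_reverse] at h1
  simpa using h _ h1

theorem Red.of_eqv {a : A} {l l' : List I} (h : C.Red a l) (e : C.Eqv a l' l)
    (hl : l'.length ≤ l.length) : C.Red a l' :=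
  fun _ h'' => hl.trans (h _ (h''.trans e))

/-! ### Roots -/

theorem wordMap_mem_roots {a : A} {α : I → ℤ} (h : α ∈ C.roots a) (l : List I) :
    C.wordMap a l α ∈ C.roots (C.wordTarget a l) := by
  obtain ⟨b, s, j, rfl, rfl⟩ := h
  exact ⟨b, l ++ s, j, wordTarget_append .., by rw [wordMap_append]; rfl⟩

theorem invMap_mem_roots {a : A} {l : List I} {α : I → ℤ} (h : α ∈ C.roots (C.wordTarget a l)) :
    C.invMap a l α ∈ C.roots a := by
  have := wordMap_mem_roots h l.reverse
  rwa [wordTarget_reverse] at this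

theorem sr_mem_roots (a : A) (i : I) : sr i ∈ C.roots a := ⟨a, [], i, rfl, rfl⟩

theorem sr_nonneg (i : I) : (0 : I → ℤ) ≤ sr i := by
  intro k
  by_cases h : k = i <;> simp [h]

theorem root_ne_zero {a : A} {α : I → ℤ} (h : α ∈ C.roots a) : α ≠ 0 := by
  obtain ⟨b, s, j, -, rfl⟩ := h
  intro h0
  rw [← (wordMap_isLinear (C := C) b s).map_zero] at h0
  have := congrFun (wordMap_injective _ _ h0) j
  simp at this

theorem pos_not_nonpos {a : A} {α : I → ℤ} (h : α ∈ C.roots a) (h0 : 0 ≤ α) : ¬ α ≤ 0 :=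
  fun h1 => root_ne_zero h (le_antisymm h1 h0)

theorem root_dichotomy (hC : C.IsFRS) {a : A} {α : I → ℤ} (h : α ∈ C.roots a) :
    0 ≤ α ∨ α ≤ 0 := hC.2.1 a α h

/-- The only positive root made negative by `σ_i` is `α_i`. -/
theorem eq_sr_of_sigma_nonpos (hC : C.IsFRS) {a : A} {i : I} {α : I → ℤ} (h : α ∈ C.roots a)
    (h0 : 0 ≤ α) (h1 : C.sigma a i α ≤ 0) : α = sr i := by
  have h2 : α = α i • (sr i : I → ℤ) := by
    funext k
    by_cases hk : k = i
    · subst hk; simp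
    · have e := h1 k
      rw [sigma_apply_ne _ hk] at e
      have e' := h0 k
      simp only [Pi.zero_apply] at e e'
      simp [hk]
      omega
  rcases hC.2.2.1 a i α h ⟨_, h2⟩ with h3 | h3
  · exact h3
  · have := h0 i
    rw [h3] at this
    simp at this

end basics

/-! ### Rank two -/

section ranktwo

variable {C : CartanScheme I A}

theorem neg_mem_roots {a : A} {α : I → ℤ} (h : α ∈ C.roots a) : -α ∈ C.roots a := by
  obtain ⟨b, s, j, rfl, rfl⟩ := h
  refine ⟨C.ρ j b, s ++ [j], j, ?_, ?_⟩
  · simp [wordTarget_append, wordTarget, C.ρ_invol]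
  · rw [wordMap_append]
    simp [wordTarget, wordMap, C.ρ_invol, sigma_rho, sigma_sr, wordMap_neg]

variable (C) in
/-- The positive roots at `t` in the plane spanned by `α_i` and `α_j`. -/
def planeRoots (t : A) (i j : I) : Set (I → ℤ) :=
  C.roots t ∩ {α | ∃ m n : ℕ, α = (m : ℤ) • Pi.single i 1 + (n : ℤ) • Pi.single j 1}

theorem mem_planeRoots {t : A} {i j : I} (hij : i ≠ j) {β : I → ℤ} :
    β ∈ C.planeRoots t i j ↔ β ∈ C.roots t ∧ 0 ≤ β ∧ ∀ k, k ≠ i → k ≠ j → β k = 0 := by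
  constructor
  · rintro ⟨h, m, n, rfl⟩
    refine ⟨h, ?_, fun k hi hj => by simp [hi, hj]⟩
    exact add_nonneg (smul_nonneg (by simp) (sr_nonneg i)) (smul_nonneg (by simp) (sr_nonneg j))
  · rintro ⟨h, h0, hk⟩
    refine ⟨h, (β i).toNat, (β j).toNat, ?_⟩
    rw [Int.toNat_of_nonneg (h0 i), Int.toNat_of_nonneg (h0 j)]
    funext k
    by_cases hi : k = i
    · subst hi; simp [hij]
    by_cases hj : k = j
    · subst hj; simp [hi]
    simp [hi, hj, hk k hi hj]

theorem planeRoots_comm (t : A) {i j : I} (hij : i ≠ j) :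
    C.planeRoots t i j = C.planeRoots t j i := by
  ext β
  rw [mem_planeRoots hij, mem_planeRoots hij.symm]
  exact and_congr_right fun _ => and_congr_right fun _ => forall_congr' fun k => forall_comm

theorem planeRoots_finite (hC : C.IsFRS) (t : A) (i j : I) : (C.planeRoots t i j).Finite :=
  (hC.1 t).subset Set.inter_subset_left

variable (C) in
/-- The positive plane roots at `t` made negative by the word `l`. -/
def planeInv (t : A) (i j : I) (l : List I) : Set (I → ℤ) :=
  {β ∈ C.planeRoots t i j | C.wordMap t l β ≤ 0}

theorem invMap_sr_mem_planeRoots {t : A} {i j : I} (hij : i ≠ j) {l : List I}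
    (hl : ∀ x ∈ l, x = i ∨ x = j) {p : I} (hp : p = i ∨ p = j)
    (hpos : 0 ≤ C.invMap t l (sr p)) : C.invMap t l (sr p) ∈ C.planeRoots t i j := by
  refine (mem_planeRoots hij).2 ⟨invMap_mem_roots (sr_mem_roots _ _), hpos, fun k hki hkj => ?_⟩
  rw [invMap_coord t l fun hk => by rcases hl k hk with h | h <;> contradiction]
  have : k ≠ p := by rcases hp with rfl | rfl <;> assumption
  simp [this]

theorem planeInv_cons (hC : C.IsFRS) {t : A} {i j : I} (hij : i ≠ j) {l : List I}
    (hl : ∀ x ∈ l, x = i ∨ x = j) {p : I} (hp : p = i ∨ p = j)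
    (hpos : 0 ≤ C.invMap t l (sr p)) :
    C.planeInv t i j (p :: l) = insert (C.invMap t l (sr p)) (C.planeInv t i j l) ∧
      C.invMap t l (sr p) ∉ C.planeInv t i j l := by
  have hmem := invMap_sr_mem_planeRoots hij hl hp hpos
  refine ⟨?_, ?_⟩
  · ext β
    simp only [planeInv, Set.mem_ofPred_eq, Set.mem_insert_iff, wordMap, Function.comp_apply]
    constructor
    · rintro ⟨hβ, h1⟩
      have hr := wordMap_mem_roots ((mem_planeRoots hij).1 hβ).1 l
      rcases root_dichotomy hC hr with h2 | h2
      · left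
        rw [← eq_sr_of_sigma_nonpos hC hr h2 h1, invMap_wordMap]
      · exact Or.inr ⟨hβ, h2⟩
    · rintro (rfl | ⟨hβ, h1⟩)
      · refine ⟨hmem, ?_⟩
        rw [wordMap_invMap, sigma_sr]
        exact neg_nonpos.2 (sr_nonneg p)
      · refine ⟨hβ, ?_⟩
        obtain ⟨hβr, hβ0, -⟩ := (mem_planeRoots hij).1 hβ
        have hr := wordMap_mem_roots (wordMap_mem_roots hβr l) [p]
        rcases root_dichotomy hC hr with h2 | h2
        · exfalso
          have h3 : C.wordMap t l β = -sr p := by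
            have h4 := eq_sr_of_sigma_nonpos hC (i := p) hr h2 (by
              simp only [wordMap, Function.comp_apply, wordTarget, id, sigma_rho, sigma_sigma]
              exact h1)
            have h5 := congrArg (C.sigma (C.wordTarget t l) p) h4
            simpa only [wordMap, Function.comp_apply, wordTarget, id, sigma_sigma,
              sigma_sr] using h5
          have h6 : β = -C.invMap t l (sr p) := by
            rw [← invMap_wordMap t l β, h3]
            exact wordMap_neg _ _ _
          exact pos_not_nonpos hβr hβ0 (h6 ▸ neg_nonpos.2 hpos)
        · exact h2
  · rintro ⟨-, h⟩
    rw [wordMap_invMap] at h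
    exact pos_not_nonpos (sr_mem_roots (C := C) t p) (sr_nonneg p) h

/-- The `n`-th letter of the alternating sequence `p, q, p, q, …`. -/
def altLetter (p q : I) (n : ℕ) : I := if Even n then p else q

/-- The alternating word of length `n` in `p` and `q` whose last letter (the one applied first)
is `p`. -/
def altWord (p q : I) : ℕ → List I
  | 0 => []
  | n + 1 => altLetter p q n :: altWord p q n

theorem altLetter_mem (p q : I) (n : ℕ) : altLetter p q n = p ∨ altLetter p q n = q := by
  unfold altLetter; split <;> simp

theorem altLetter_succ (p q : I) (n : ℕ) : altLetter p q (n + 1) = altLetter q p n := by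
  unfold altLetter; simp only [Nat.even_add_one]; split <;> simp_all

theorem altLetter_cases (p q : I) (n : ℕ) {x : I} (hx : x = p ∨ x = q) :
    x = altLetter p q n ∨ x = altLetter p q (n + 1) := by
  rw [altLetter_succ]; unfold altLetter; split <;> tauto

theorem mem_altWord {p q : I} {n : ℕ} {x : I} (h : x ∈ altWord p q n) : x = p ∨ x = q := by
  induction n with
  | zero => simp [altWord] at h
  | succ n ih =>
    rcases List.mem_cons.1 h with rfl | h
    · exact altLetter_mem p q n
    · exact ih h

theorem length_altWord (p q : I) (n : ℕ) : (altWord p q n).length = n := by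
  induction n with
  | zero => rfl
  | succ n ih => simp [altWord, ih]

theorem planeInv_subset (t : A) (i j : I) (l : List I) :
    C.planeInv t i j l ⊆ C.planeRoots t i j := fun _ h => h.1

/-- Up to the number of positive plane roots, an alternating word of length `n` inverts exactly
`n` plane roots: its leading letter is a descent, and the next letter of the alternating
sequence is an ascent until all positive plane roots are inverted. -/
theorem altWord_count (hC : C.IsFRS) {t : A} {i j : I} (hij : i ≠ j) (n : ℕ) :
    n ≤ (C.planeRoots t i j).ncard →
      (C.planeInv t i j (altWord i j n)).ncard = n ∧
        (∀ n', n = n' + 1 → C.invMap t (altWord i j n) (sr (altLetter i j n')) ≤ 0) ∧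
        (n < (C.planeRoots t i j).ncard →
          0 ≤ C.invMap t (altWord i j n) (sr (altLetter i j n))) := by
  -- The next letter is an ascent: otherwise both simple roots would become negative, and then
  -- every positive plane root would be inverted.
  have key : ∀ n, (C.planeInv t i j (altWord i j n)).ncard = n →
      (∀ n', n = n' + 1 → C.invMap t (altWord i j n) (sr (altLetter i j n')) ≤ 0) →
      n < (C.planeRoots t i j).ncard →
      0 ≤ C.invMap t (altWord i j n) (sr (altLetter i j n)) := by
    intro n h1 h2 hn
    rcases n with _ | n'
    · exact sr_nonneg _
    rcases root_dichotomy hC (invMap_mem_roots (l := altWord i j (n' + 1))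
      (sr_mem_roots (C := C) _ (altLetter i j (n' + 1)))) with h3 | h3
    · exact h3
    exfalso
    obtain ⟨β, hβ, hβ'⟩ := Set.exists_mem_notMem_of_ncard_lt_ncard (h1.trans_lt hn)
      ((planeRoots_finite hC t i j).subset (planeInv_subset ..))
    obtain ⟨hr, h0, hk⟩ := (mem_planeRoots hij).1 hβ
    have hr' := wordMap_mem_roots hr (altWord i j (n' + 1))
    have h4 : 0 ≤ C.wordMap t (altWord i j (n' + 1)) β :=
      (root_dichotomy hC hr').resolve_right fun h => hβ' ⟨hβ, h⟩
    refine pos_not_nonpos hr h0 ?_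
    rw [← invMap_wordMap t (altWord i j (n' + 1)) β]
    refine wordMap_nonpos _ _ h4 fun k hk0 => ?_
    have hkij : k = i ∨ k = j := by
      by_contra hne
      rw [not_or] at hne
      refine hk0 ?_
      rw [wordMap_coord _ _ fun hm => not_or.2 hne (mem_altWord hm), hk k hne.1 hne.2]
    rcases altLetter_cases i j n' hkij with rfl | rfl
    · exact h2 n' rfl
    · exact h3
  induction n with
  | zero =>
    intro _
    have h0 : (C.planeInv t i j (altWord i j 0)).ncard = 0 := by
      convert Set.ncard_empty (I → ℤ)
      ext β
      simp only [Set.mem_empty_iff_false, iff_false]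
      rintro ⟨hβ, h⟩
      obtain ⟨hr, h0, -⟩ := (mem_planeRoots hij).1 hβ
      exact pos_not_nonpos hr h0 h
    exact ⟨h0, by simp, key 0 h0 (by simp)⟩
  | succ n ih =>
    intro hn
    obtain ⟨h1, -, h3⟩ := ih (by omega)
    have hpos := h3 (by omega)
    obtain ⟨h4, h5⟩ := planeInv_cons hC hij (l := altWord i j n) (fun x => mem_altWord)
      (altLetter_mem i j n) hpos
    have h6 : (C.planeInv t i j (altWord i j (n + 1))).ncard = n + 1 := by
      rw [altWord, h4, Set.ncard_insert_of_notMem h5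
        ((planeRoots_finite hC t i j).subset (planeInv_subset ..)), h1]
    have h7 : ∀ n', n + 1 = n' + 1 →
        C.invMap t (altWord i j (n + 1)) (sr (altLetter i j n')) ≤ 0 := by
      intro n' hn'
      obtain rfl : n = n' := by omega
      rw [altWord, invMap_cons, Function.comp_apply, sigma_sr]
      have : C.invMap t (altWord i j n) (-sr (altLetter i j n)) = _ := wordMap_neg _ _ _
      rw [this]
      exact neg_nonpos.2 hpos
    exact ⟨h6, h7, key _ h6 h7⟩

/-- The alternating word of maximal length inverts all positive plane roots. -/
theorem altWord_inverts (hC : C.IsFRS) {t : A} {i j : I} (hij : i ≠ j) {β : I → ℤ}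
    (hβ : β ∈ C.planeRoots t i j) :
    C.wordMap t (altWord i j (C.planeRoots t i j).ncard) β ≤ 0 := by
  have h := Set.eq_of_subset_of_ncard_le (planeInv_subset (C := C) t i j _)
    (altWord_count hC hij (t := t) _ le_rfl).1.ge (planeRoots_finite hC t i j)
  exact (h.ge hβ).2

theorem inverts_invMap (hC : C.IsFRS) {t : A} {i j : I} (hij : i ≠ j) {l : List I}
    (hl : ∀ x ∈ l, x = i ∨ x = j) (h : ∀ β ∈ C.planeRoots t i j, C.wordMap t l β ≤ 0)
    {p : I} (hp : p = i ∨ p = j) : -C.invMap t l (sr p) ∈ C.planeRoots t i j := by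
  have hr : C.invMap t l (sr p) ∈ C.roots t := invMap_mem_roots (sr_mem_roots _ _)
  rcases root_dichotomy hC hr with h1 | h1
  · have h2 := h _ (invMap_sr_mem_planeRoots hij hl hp h1)
    rw [wordMap_invMap] at h2
    exact absurd h2 (pos_not_nonpos (sr_mem_roots (C := C) t p) (sr_nonneg p))
  · refine (mem_planeRoots hij).2 ⟨neg_mem_roots hr, neg_nonneg.2 h1, fun k hki hkj => ?_⟩
    rw [Pi.neg_apply, invMap_coord t l fun hk => by rcases hl k hk with h | h <;> contradiction]
    have : k ≠ p := by rcases hp with rfl | rfl <;> assumption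
    simp [this]

/-- Each simple reflection changes the sign of the area form on the plane of `α_i, α_j`. -/
theorem area_sigma (a : A) {i j p : I} (hij : i ≠ j) (hp : p = i ∨ p = j) {v w : I → ℤ}
    (hv : ∀ k, k ≠ i → k ≠ j → v k = 0) (hw : ∀ k, k ≠ i → k ≠ j → w k = 0) :
    C.sigma a p v i * C.sigma a p w j - C.sigma a p v j * C.sigma a p w i =
      -(v i * w j - v j * w i) := by
  have hs : ∀ x : I → ℤ, (∀ k, k ≠ i → k ≠ j → x k = 0) →
      ∑ k, C.c a p k * x k = C.c a p i * x i + C.c a p j * x j := fun x hx =>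
    Fintype.sum_eq_add i j hij fun k hk => by rw [hx k hk.1 hk.2, mul_zero]
  rcases hp with rfl | rfl
  · simp only [sigma, hs v hv, hs w hw, C.c_diag, if_true, if_neg hij.symm]
    ring
  · simp only [sigma, hs v hv, hs w hw, C.c_diag, if_true, if_neg hij]
    ring

theorem area_wordMap (a : A) {i j : I} (hij : i ≠ j) {l : List I}
    (hl : ∀ x ∈ l, x = i ∨ x = j) {v w : I → ℤ}
    (hv : ∀ k, k ≠ i → k ≠ j → v k = 0) (hw : ∀ k, k ≠ i → k ≠ j → w k = 0) :
    C.wordMap a l v i * C.wordMap a l w j - C.wordMap a l v j * C.wordMap a l w i =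
      (-1) ^ l.length * (v i * w j - v j * w i) := by
  induction l with
  | nil => simp [wordMap]
  | cons p l ih =>
    have hl' : ∀ x ∈ l, x = i ∨ x = j := fun x hx => hl x (List.mem_cons_of_mem _ hx)
    have hc : ∀ x : I → ℤ, (∀ k, k ≠ i → k ≠ j → x k = 0) →
        ∀ k, k ≠ i → k ≠ j → C.wordMap a l x k = 0 := fun x hx k hki hkj => by
      rw [wordMap_coord a l fun hk => by rcases hl' k hk with h | h <;> contradiction]
      exact hx k hki hkj
    simp only [wordMap, Function.comp_apply]
    rw [area_sigma _ hij (hl p List.mem_cons_self) (hc v hv) (hc w hw), ih hl', List.length_cons]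
    ring

/-- A rank two word of even length that, together with its inverse, keeps `α_i` and `α_j`
positive acts as the identity. On the plane it is given by a nonnegative integral matrix with
nonnegative inverse, hence by a permutation matrix, and evenness makes its determinant `1`;
on the other simple roots `α_k` it adds a nonnegative vector of the plane, and so does its
inverse. -/
theorem wordMap_eq_id (hC : C.IsFRS) {t : A} {i j : I} (hij : i ≠ j) {l : List I}
    (hl : ∀ x ∈ l, x = i ∨ x = j) (he : Even l.length)
    (hY : ∀ p, p = i ∨ p = j → 0 ≤ C.wordMap t l (sr p))
    (hX : ∀ p, p = i ∨ p = j → 0 ≤ C.invMap t l (sr p)) : C.wordMap t l = id := by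
  have hnot : ∀ k, k ≠ i → k ≠ j → k ∉ l := fun k hki hkj hk => by
    rcases hl k hk with h | h <;> contradiction
  have dec : ∀ x : I → ℤ, (∀ k, k ≠ i → k ≠ j → x k = 0) →
      x = x i • (sr i : I → ℤ) + x j • (sr j : I → ℤ) := by
    intro x hx
    funext k
    by_cases hi : k = i
    · subst hi; simp [hij]
    by_cases hj : k = j
    · subst hj; simp [hi]
    simp [hi, hj, hx k hi hj]
  have plane : ∀ p, p = i ∨ p = j → ∀ k, k ≠ i → k ≠ j → (sr p : I → ℤ) k = 0 := by
    rintro p (rfl | rfl) k h1 h2 <;> simp [h1, h2]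
  have planeY : ∀ p, p = i ∨ p = j → ∀ k, k ≠ i → k ≠ j → C.wordMap t l (sr p) k = 0 :=
    fun p hp k h1 h2 => by rw [wordMap_coord t l (hnot k h1 h2), plane p hp k h1 h2]
  have linX : IsLinearMap ℤ (C.invMap t l) := wordMap_isLinear _ _
  have expand : ∀ p, p = i ∨ p = j → sr p = C.wordMap t l (sr p) i • C.invMap t l (sr i) +
      C.wordMap t l (sr p) j • C.invMap t l (sr j) := fun p hp => by
    conv_lhs => rw [← invMap_wordMap t l (sr p), dec _ (planeY p hp)]
    rw [linX.map_add, linX.map_smul, linX.map_smul]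
  have detY := area_wordMap (C := C) t hij hl (plane i (.inl rfl)) (plane j (.inr rfl))
  have detX := area_wordMap (C := C) (C.wordTarget t l) hij (l := l.reverse)
    (by simpa using hl) (plane i (.inl rfl)) (plane j (.inr rfl))
  rw [he.neg_one_pow] at detY
  rw [List.length_reverse, he.neg_one_pow] at detX
  change C.invMap t l _ i * C.invMap t l _ j - C.invMap t l _ j * C.invMap t l _ i = _ at detX
  have eii := congrFun (expand i (.inl rfl)) i
  have eij := congrFun (expand i (.inl rfl)) j
  have eji := congrFun (expand j (.inr rfl)) i
  have ejj := congrFun (expand j (.inr rfl)) j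
  have y1 := hY i (.inl rfl) i
  have y2 := hY i (.inl rfl) j
  have y3 := hY j (.inr rfl) i
  have y4 := hY j (.inr rfl) j
  have x1 := hX i (.inl rfl) i
  have x2 := hX i (.inl rfl) j
  have x3 := hX j (.inr rfl) i
  have x4 := hX j (.inr rfl) j
  have fixY : ∀ p, p = i ∨ p = j → C.wordMap t l (sr p) = sr p := by
    have h1 : C.wordMap t l (sr i) i = 1 ∧ C.wordMap t l (sr i) j = 0 ∧
        C.wordMap t l (sr j) i = 0 ∧ C.wordMap t l (sr j) j = 1 := by
      simp only [Pi.single_eq_same, Pi.single_eq_of_ne hij, Pi.single_eq_of_ne hij.symm,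
        Pi.add_apply, Pi.smul_apply, smul_eq_mul, Pi.zero_apply] at *
      generalize C.wordMap t l (Pi.single i 1) i = a at *
      generalize C.wordMap t l (Pi.single i 1) j = b at *
      generalize C.wordMap t l (Pi.single j 1) i = c at *
      generalize C.wordMap t l (Pi.single j 1) j = d at *
      generalize C.invMap t l (Pi.single i 1) i = a' at *
      generalize C.invMap t l (Pi.single i 1) j = b' at *
      generalize C.invMap t l (Pi.single j 1) i = c' at *
      generalize C.invMap t l (Pi.single j 1) j = d' at *
      have hda : 0 < d' := by
        rcases x4.lt_or_eq with h | h
        · exact h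
        · rw [← h] at detX; nlinarith
      have haa : 0 < a' := by
        rcases x1.lt_or_eq with h | h
        · exact h
        · rw [← h] at detX; nlinarith
      have hb : b = 0 := by
        by_contra hb
        have : 0 < b := lt_of_le_of_ne y2 (Ne.symm hb)
        nlinarith [mul_pos this hda, mul_nonneg y1 x2]
      have hc : c = 0 := by
        by_contra hc
        have : 0 < c := lt_of_le_of_ne y3 (Ne.symm hc)
        nlinarith [mul_pos this haa, mul_nonneg y4 x3]
      subst hb hc
      have had : a * d = 1 := by linarith
      have ha := Int.eq_one_or_neg_one_of_mul_eq_one had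
      refine ⟨by omega, rfl, rfl, ?_⟩
      obtain rfl : a = 1 := by omega
      linarith
    rintro p (rfl | rfl)
    · rw [dec _ (planeY p (.inl rfl)), h1.1, h1.2.1]; simp
    · rw [dec _ (planeY p (.inr rfl)), h1.2.2.1, h1.2.2.2]; simp
  have fixX : ∀ p, p = i ∨ p = j → C.invMap t l (sr p) = sr p := fun p hp => by
    conv_lhs => rw [← fixY p hp, invMap_wordMap]
  have fix : ∀ k, C.wordMap t l (sr k) = sr k := by
    intro k
    by_cases hk : k = i ∨ k = j
    · exact fixY k hk
    rw [not_or] at hk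
    have pos : ∀ (b : A) (s : List I), k ∉ s → 0 ≤ C.wordMap b s (sr k) := by
      intro b s hs
      refine (root_dichotomy hC (wordMap_mem_roots (sr_mem_roots b k) s)).resolve_right
        fun h => ?_
      have := h k
      rw [wordMap_coord b s hs] at this
      simp at this
    have hk' := hnot k hk.1 hk.2
    have hYk := pos t l hk'
    have hXk : 0 ≤ C.invMap t l (sr k) := pos _ l.reverse (by simpa using hk')
    set δ := C.wordMap t l (sr k) - sr k with hδ
    have hδp : ∀ m, m ≠ i → m ≠ j → δ m = 0 := fun m h1 h2 => by
      rw [hδ, Pi.sub_apply, wordMap_coord t l (hnot m h1 h2), sub_self]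
    have hXδ : C.invMap t l δ = δ := by
      conv_lhs => rw [dec δ hδp]
      rw [linX.map_add, linX.map_smul, linX.map_smul, fixX i (.inl rfl), fixX j (.inr rfl)]
      exact (dec δ hδp).symm
    have hsum : C.invMap t l (sr k) = sr k - δ := by
      have h1 : sr k + δ = C.wordMap t l (sr k) := by rw [hδ]; abel
      have h2 := invMap_wordMap (C := C) t l (sr k)
      rw [← h1, linX.map_add, hXδ] at h2
      exact eq_sub_of_add_eq h2
    have hz : ∀ p, p = i ∨ p = j → δ p = 0 := by
      intro p hp
      have hpk : p ≠ k := by rintro rfl; exact not_or.2 hk hp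
      have h1 := hYk p
      have h2 := hXk p
      rw [hsum] at h2
      have h3 : δ p = C.wordMap t l (sr k) p - (sr k : I → ℤ) p := rfl
      simp only [Pi.zero_apply, Pi.sub_apply, Pi.single_eq_of_ne hpk] at h1 h2 h3
      omega
    have : δ = 0 := by
      rw [dec δ hδp, hz i (.inl rfl), hz j (.inr rfl)]; simp
    rwa [hδ, sub_eq_zero] at this
  funext x
  rw [wordMap_eq_sum]
  funext m
  simp [fix, Finset.sum_apply, Pi.single_apply]

theorem wordTarget_altWord_even (t : A) (i j : I) (n : ℕ) :
    C.wordTarget t (altWord i j (2 * n)) = (fun x => C.ρ j (C.ρ i x))^[n] t := by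
  induction n with
  | zero => rfl
  | succ n ih =>
    rw [Function.iterate_succ_apply', ← ih, Nat.mul_succ]
    have h1 : altLetter i j (2 * n) = i := by simp [altLetter]
    have h2 : altLetter i j (2 * n + 1) = j := by simp [altLetter]
    simp only [altWord, wordTarget, h1, h2]

/-- By axiom (R4), the two alternating words of maximal length have the same target. -/
theorem wordTarget_altWord (hC : C.IsFRS) {t : A} {i j : I} (hij : i ≠ j) :
    C.wordTarget t (altWord i j (C.planeRoots t i j).ncard) =
      C.wordTarget t (altWord j i (C.planeRoots t i j).ncard) := by
  set m := (C.planeRoots t i j).ncard with hm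
  -- The alternating walk of length `2m` is closed; traverse it from both ends.
  have key : ∀ n, n ≤ 2 * m →
      C.wordTarget t (altWord i j (2 * m - n)) = C.wordTarget t (altWord j i n) := by
    intro n
    induction n with
    | zero =>
      intro _
      have h := hC.2.2.2 t j i hij.symm
      rw [Nat.sub_zero, wordTarget_altWord_even, hm, planeRoots_comm t hij]
      exact h
    | succ n ih =>
      intro hn
      have h1 := ih (by omega)
      obtain ⟨r, hr⟩ : ∃ r, 2 * m - n = r + 1 := ⟨2 * m - n - 1, by omega⟩
      have hr' : 2 * m - (n + 1) = r := by omega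
      rw [hr']
      rw [hr, altWord, wordTarget] at h1
      have hl : altLetter j i n = altLetter i j r := by
        rw [← altLetter_succ]
        have hpar : Even (n + 1) ↔ Even r := by
          have : Even (r + (n + 1)) := ⟨m, by omega⟩
          rw [Nat.even_add] at this
          exact this.symm
        simp only [altLetter, hpar]
      rw [altWord, wordTarget, hl, ← h1, C.ρ_invol]
  have := key m (by omega)
  rwa [show 2 * m - m = m by omega] at this

/-- The rank two Coxeter relation. -/
theorem altWord_eqv (hC : C.IsFRS) {t : A} {i j : I} (hij : i ≠ j) :
    C.Eqv t (altWord i j (C.planeRoots t i j).ncard)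
      (altWord j i (C.planeRoots t i j).ncard) := by
  refine ⟨wordTarget_altWord hC hij, ?_⟩
  have hT := wordTarget_altWord hC hij (t := t)
  have n1 : ∀ β ∈ C.planeRoots t i j, C.wordMap t (altWord i j (C.planeRoots t i j).ncard) β ≤ 0 :=
    fun β hβ => altWord_inverts hC hij hβ
  have n2 : ∀ β ∈ C.planeRoots t i j, C.wordMap t (altWord j i (C.planeRoots t i j).ncard) β ≤ 0 := by
    intro β hβ
    rw [planeRoots_comm t hij] at hβ ⊢
    exact altWord_inverts hC hij.symm hβ
  have m1 : ∀ x ∈ altWord i j (C.planeRoots t i j).ncard, x = i ∨ x = j := fun x => mem_altWord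
  have m2 : ∀ x ∈ altWord j i (C.planeRoots t i j).ncard, x = i ∨ x = j :=
    fun x hx => (mem_altWord hx).symm
  have l1 := length_altWord i j (C.planeRoots t i j).ncard
  have l2 := length_altWord j i (C.planeRoots t i j).ncard
  generalize altWord i j (C.planeRoots t i j).ncard = l at *
  generalize altWord j i (C.planeRoots t i j).ncard = l' at *
  have eY : C.wordMap (C.wordTarget t l) (l' ++ l.reverse) = C.wordMap t l' ∘ C.invMap t l := by
    rw [wordMap_append, wordTarget_reverse]; rfl
  have eX : C.invMap (C.wordTarget t l) (l' ++ l.reverse) = C.wordMap t l ∘ C.invMap t l' := by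
    rw [invMap_append, wordTarget_reverse]
    simp only [invMap, wordTarget_reverse, List.reverse_reverse]
  have h := wordMap_eq_id hC hij (t := C.wordTarget t l) (l := l' ++ l.reverse)
    (by
      intro x hx
      rw [List.mem_append, List.mem_reverse] at hx
      exact hx.elim (m2 x) (m1 x))
    (by simp [l1, l2])
    (by
      intro p hp
      have := n2 _ (inverts_invMap hC hij m1 n1 hp)
      rw [wordMap_neg] at this
      rw [eY]
      exact neg_nonpos.1 this)
    (by
      intro p hp
      have := n1 _ (inverts_invMap hC hij m2 n2 hp)
      rw [wordMap_neg] at this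
      rw [eX]
      exact neg_nonpos.1 this)
  rw [eY] at h
  funext x
  have := congrFun h (C.wordMap t l x)
  simpa [invMap_wordMap] using this.symm

end ranktwo

/-! ### The sign criterion for the length -/

section length

variable {C : CartanScheme I A}

theorem one_le_ncard_planeRoots (hC : C.IsFRS) (t : A) {i j : I} (hij : i ≠ j) :
    1 ≤ (C.planeRoots t i j).ncard := by
  rw [Nat.one_le_iff_ne_zero, Ne, Set.ncard_eq_zero (planeRoots_finite hC t i j)]
  refine Set.nonempty_iff_ne_empty.1 ⟨sr i, (mem_planeRoots hij).2
    ⟨sr_mem_roots _ _, sr_nonneg i, fun k hk _ => ?_⟩⟩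
  simp [hk]

/-- Beyond the maximal length, alternating words can be shortened by two letters. -/
theorem altWord_shorten (hC : C.IsFRS) {t : A} {p q : I} (hpq : p ≠ q) (n : ℕ)
    (hn : (C.planeRoots t p q).ncard ≤ n) :
    ∃ w, C.Eqv t w (altWord p q (n + 1)) ∧ w.length < n := by
  induction n, hn using Nat.le_induction with
  | base =>
    have h := altWord_eqv hC hpq (t := t)
    obtain ⟨m, hm⟩ : ∃ m, (C.planeRoots t p q).ncard = m + 1 :=
      ⟨_, (Nat.sub_add_cancel (one_le_ncard_planeRoots hC t hpq)).symm⟩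
    rw [hm] at h ⊢
    refine ⟨altWord q p m, ?_, by rw [length_altWord]; omega⟩
    refine Eqv.symm ((h.cons (altLetter p q (m + 1))).trans ?_)
    rw [altLetter_succ]
    exact Eqv.cancel t _ _
  | succ n _ ih =>
    obtain ⟨w, hw, hl⟩ := ih
    exact ⟨altLetter p q (n + 1) :: w, hw.cons _, by simpa using hl⟩

theorem altWord_or_shorter (t : A) (i j : I) {w : List I} (hw : ∀ x ∈ w, x = i ∨ x = j) :
    (w = altWord i j w.length ∨ w = altWord j i w.length) ∨
      ∃ w', C.Eqv t w' w ∧ w'.length + 2 ≤ w.length := by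
  induction w with
  | nil => exact .inl (.inl rfl)
  | cons x w ih =>
    have key : ∀ p q, (x = p ∨ x = q) → w = altWord p q w.length →
        (x :: w = altWord p q (w.length + 1) ∨ x :: w = altWord q p (w.length + 1)) ∨
        ∃ w', C.Eqv t w' (x :: w) ∧ w'.length + 2 ≤ w.length + 1 := by
      intro p q hx h
      rcases hn : w.length with _ | n
      · rw [List.length_eq_zero_iff] at hn
        subst hn
        left
        rcases hx with rfl | rfl <;> simp [altWord, altLetter]
      rw [hn] at h
      rcases altLetter_cases p q n hx with rfl | rfl
      · right
        refine ⟨altWord p q n, ?_, by simp [length_altWord]⟩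
        rw [h]
        exact (Eqv.cancel t _ _).symm
      · left; left
        rw [h]; rfl
    rcases ih fun y hy => hw y (List.mem_cons_of_mem _ hy) with (h | h) | ⟨w', h, hl⟩
    · exact key i j (hw x List.mem_cons_self) h
    · rcases key j i (hw x List.mem_cons_self).symm h with h' | h'
      · exact .inl h'.symm
      · exact .inr h'
    · exact .inr ⟨x :: w', h.cons x, by simpa using hl⟩

theorem altWord_ascent (hC : C.IsFRS) {t : A} {p q : I} (hpq : p ≠ q) (n : ℕ) {x : I}
    (hx : x = p ∨ x = q) : 0 ≤ C.invMap t (altWord p q n) (sr x) ∨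
      ∃ w, C.Eqv t w (x :: altWord p q n) ∧ w.length < n := by
  rcases altLetter_cases p q n hx with rfl | rfl
  · by_cases hn : n < (C.planeRoots t p q).ncard
    · exact .inl ((altWord_count hC hpq n hn.le).2.2 hn)
    · exact .inr (altWord_shorten hC hpq n (by omega))
  · rcases n with _ | n
    · exact .inl (sr_nonneg _)
    · right
      refine ⟨altWord p q n, ?_, by simp [length_altWord]⟩
      rw [altLetter_succ, altLetter_succ]
      exact (Eqv.cancel t _ _).symm

/-- The sign criterion for words in two letters. -/
theorem rankTwo_ascent (hC : C.IsFRS) {t : A} {i j : I} (hij : i ≠ j) {w : List I}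
    (hw : ∀ x ∈ w, x = i ∨ x = j) : 0 ≤ C.invMap t w (sr i) ∨
      ∃ w', C.Eqv t w' (i :: w) ∧ w'.length < w.length := by
  rcases altWord_or_shorter (C := C) t i j hw with (h | h) | ⟨w', h, hl⟩
  · have := altWord_ascent hC (t := t) hij w.length (.inl rfl)
    rwa [← h] at this
  · have := altWord_ascent hC (t := t) hij.symm w.length (x := i) (.inr rfl)
    rwa [← h] at this
  · exact .inr ⟨i :: w', h.cons i, by simp only [List.length_cons]; omega⟩

/-- If prefixing `i` does not shorten the reduced word `l`, then the inverse of `l` keeps `α_i`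
positive. To prove it, write `l` as `w ++ y` with `w` a word in `i` and another letter `j`, and
with `y` as short as possible: induction gives the claim for `y` and both letters `i`, `j`,
and the rank two criterion deals with `w`. -/
theorem ascent_nonneg (hC : C.IsFRS) {a : A} (n : ℕ) : ∀ l : List I, l.length = n → C.Red a l →
    ∀ i, (∀ l', C.Eqv a l' (i :: l) → l.length ≤ l'.length) → 0 ≤ C.invMap a l (sr i) := by
  induction n using Nat.strong_induction_on with
  | _ n ih =>
  intro l hln hred i hi
  rcases l with _ | ⟨j, l0⟩
  · exact sr_nonneg i
  have hij : i ≠ j := by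
    rintro rfl
    have := hi l0 (Eqv.cancel a i l0).symm
    simp at this
  obtain ⟨y, ⟨w, hw, hwe, hwl⟩, hmin⟩ := exists_minimalFor_of_wellFoundedLT
    (fun y => ∃ w : List I, (∀ x ∈ w, x = i ∨ x = j) ∧ C.Eqv a (w ++ y) (j :: l0) ∧
      w.length + y.length ≤ (j :: l0).length) List.length
    ⟨l0, [j], by simp, Eqv.refl _ _, by simp [Nat.add_comm]⟩
  have hyl : y.length < n := by
    by_contra hlt
    simp only [List.length_cons] at hln
    have : l0.length < y.length := by omega
    have h2 := hmin (j := l0) ⟨[j], by simp, Eqv.refl _ _, by simp [Nat.add_comm]⟩ this.le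
    omega
  have hyred : C.Red a y := by
    refine Red.suffix (s := w) (hred.of_eqv hwe ?_)
    simpa using hwl
  have hy : ∀ p, p = i ∨ p = j → 0 ≤ C.invMap a y (sr p) := by
    intro p hp
    refine ih _ hyl y rfl hyred p fun l' hl' => ?_
    by_contra hlt
    have hlt' : l'.length < y.length := by omega
    have h2 := hmin (j := l') ⟨w ++ [p], ?_, ?_, ?_⟩ hlt'.le
    · omega
    · intro x hx
      rw [List.mem_append, List.mem_singleton] at hx
      rcases hx with hx | rfl
      · exact hw x hx
      · exact hp
    · rw [List.append_assoc, List.singleton_append]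
      exact (((hl'.cons p).trans (Eqv.cancel a p y)).append_left w).trans hwe
    · simp only [List.length_append, List.length_singleton]
      omega
  rcases rankTwo_ascent hC (t := C.wordTarget a y) hij hw with h | ⟨w', h, hl⟩
  · rw [← hwe.invMap_eq, invMap_append, Function.comp_apply]
    refine wordMap_nonneg _ _ h fun k hk => hy k ?_
    by_contra hne
    rw [not_or] at hne
    refine hk ?_
    rw [invMap_coord _ w fun hkw => not_or.2 hne (hw k hkw)]
    simp [hne.1]
  · have h1 := hi (w' ++ y) (h.append_right.trans (hwe.cons i))
    rw [List.length_append] at h1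
    omega

theorem Red.nonneg (hC : C.IsFRS) {a : A} {i : I} {l : List I} (h : C.Red a (i :: l)) :
    0 ≤ C.invMap a l (sr i) :=
  ascent_nonneg hC _ l rfl (Red.suffix (s := [i]) h) i fun l' hl' => by
    have := h l' hl'
    simp only [List.length_cons] at this
    omega

theorem Red.cons (hC : C.IsFRS) {a : A} {i : I} {l : List I} (h : C.Red a l)
    (h0 : 0 ≤ C.invMap a l (sr i)) : C.Red a (i :: l) := by
  obtain ⟨l', he, hr⟩ := exists_red (C := C) a (i :: l)
  by_cases hlen : l.length < l'.length
  · intro l'' hl''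
    have := hr l'' (hl''.trans he.symm)
    simp only [List.length_cons]
    omega
  · exfalso
    have h1 := ascent_nonneg hC _ l' rfl hr i fun l'' hl'' => by
      have := h l'' (hl''.trans ((he.cons i).trans (Eqv.cancel a i l)))
      omega
    rw [he.invMap_eq, invMap_cons, Function.comp_apply, sigma_sr] at h1
    have h2 : C.invMap a l (-sr i) = -C.invMap a l (sr i) := wordMap_neg _ _ _
    rw [h2] at h1
    exact pos_not_nonpos (invMap_mem_roots (sr_mem_roots _ _)) h0 (neg_nonneg.1 h1)

/-- A reduced word avoids the letter `i` as soon as its map preserves the `i`-th coordinate.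
If `l = l₁ ++ i :: l₂` with `i ∉ l₁`, then the positive root inverted by the displayed letter `i`
is sent by `l` to a root with `i`-th coordinate `-1`. -/
theorem Red.notMem_of_coord (hC : C.IsFRS) {a : A} {i : I} {l : List I} (h : C.Red a l)
    (hc : ∀ x, C.wordMap a l x i = x i) : i ∉ l := by
  intro hi
  obtain ⟨l₁, l₂, rfl, hl₁⟩ := List.eq_append_cons_of_mem hi
  have h1 := h.suffix.nonneg hC i
  have h2 := hc (C.invMap a l₂ (sr i))
  rw [wordMap_append, Function.comp_apply, wordMap_coord _ _ hl₁, wordMap, Function.comp_apply,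
    wordMap_invMap, sigma_sr] at h2
  simp only [Pi.neg_apply, Pi.single_eq_same, Pi.zero_apply] at h1 h2
  omega

/-- A coset modulo the words avoiding `i` has a minimal representative `l`: every element of the
coset of `U` has a reduced word of the form `q' ++ l` with `i ∉ q'`. Indeed, minimality of `l`
keeps all `α_k` with `k ≠ i` positive under its inverse, hence also the positive roots of the
parabolic, so each letter of a reduced `q'` is an ascent. -/
theorem exists_coset_min (hC : C.IsFRS) (a : A) (U : List I) (i : I) :
    ∃ l p : List I, i ∉ p ∧ C.Eqv a (p ++ l) U ∧
      ∀ q, i ∉ q → ∃ q', i ∉ q' ∧ C.Eqv a (q' ++ l) (q ++ l) ∧ C.Red a (q' ++ l) := by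
  obtain ⟨l, ⟨p, hp, hpe⟩, hmin⟩ := exists_minimalFor_of_wellFoundedLT
    (fun l => ∃ p : List I, i ∉ p ∧ C.Eqv a (p ++ l) U) List.length
    ⟨U, [], by simp, Eqv.refl _ _⟩
  have hmin' : ∀ l' p', i ∉ p' → C.Eqv a (p' ++ l') U → l.length ≤ l'.length := by
    intro l' p' h1 h2
    by_contra hlt
    exact hlt (hmin (j := l') ⟨p', h1, h2⟩ (by omega))
  refine ⟨l, p, hp, hpe, fun q hq => ?_⟩
  have hred : C.Red a l := fun l' hl' => hmin' l' p hp ((hl'.append_left p).trans hpe)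
  have hpos : ∀ k, k ≠ i → 0 ≤ C.invMap a l (sr k) := by
    intro k hk
    refine ascent_nonneg hC _ l rfl hred k fun l' hl' => hmin' l' (p ++ [k]) ?_ ?_
    · simpa [hp] using hk.symm
    · rw [List.append_assoc, List.singleton_append]
      exact (((hl'.cons k).trans (Eqv.cancel a k l)).append_left p).trans hpe
  obtain ⟨q', hq'e, hq'r⟩ := exists_red (C := C) (C.wordTarget a l) q
  have hq' : i ∉ q' := hq'r.notMem_of_coord hC fun x => by rw [hq'e.2, wordMap_coord _ _ hq]
  refine ⟨q', hq', hq'e.append_right, ?_⟩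
  clear hq'e
  induction q' with
  | nil => exact hred
  | cons j q' ih =>
    have hj : i ≠ j ∧ i ∉ q' := by simpa using hq'
    refine (ih (Red.suffix (s := [j]) hq'r) hj.2).cons hC ?_
    rw [invMap_append, Function.comp_apply]
    refine wordMap_nonneg _ _ (hq'r.nonneg hC) fun k hk => hpos k ?_
    rintro rfl
    refine hk ?_
    rw [invMap_coord _ _ hj.2]
    simp [hj.1]

end length

/-! ### Morphisms -/

section morphisms

variable {C : CartanScheme I A}

variable (C) in
/-- The morphism with target `a` obtained by reading the word `l` backwards, i.e. the inverse of
the morphism with source `a` given by `l`. -/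
def ofWord (a : A) (l : List I) : Mor C :=
  ⟨C.wordTarget a l, a, C.invMap a l, l.reverse, wordTarget_reverse a l, rfl⟩

theorem ofWord_congr {a : A} {l l' : List I} (h : C.Eqv a l l') : ofWord C a l = ofWord C a l' :=
  Mor.ext h.1 rfl h.invMap_eq

theorem exists_ofWord (w : Mor C) : ∃ l, w = ofWord C w.tgt l ∧ C.Red w.tgt l := by
  obtain ⟨l, h1, h2⟩ := w.spec
  have h3 : w = ofWord C w.tgt l.reverse := by
    have h4 : w.src = C.wordTarget w.tgt l.reverse := by rw [← h1, wordTarget_reverse]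
    refine Mor.ext h4 rfl ?_
    change _ = C.wordMap (C.wordTarget w.tgt l.reverse) l.reverse.reverse
    rw [← h4, List.reverse_reverse, h2]
  obtain ⟨l', he, hr⟩ := exists_red (C := C) w.tgt l.reverse
  exact ⟨l', h3.trans (ofWord_congr he.symm), hr⟩

theorem comp_src {u v : Mor C} (h : v.tgt = u.src) : (u.comp v).src = v.src := by
  unfold Mor.comp; rw [dif_pos h]

theorem comp_tgt {u v : Mor C} (h : v.tgt = u.src) : (u.comp v).tgt = u.tgt := by
  unfold Mor.comp; rw [dif_pos h]

theorem comp_toFun {u v : Mor C} (h : v.tgt = u.src) :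
    (u.comp v).toFun = u.toFun ∘ v.toFun := by
  unfold Mor.comp; rw [dif_pos h]

theorem ofWord_comp (a : A) (s l : List I) :
    (ofWord C a l).comp (ofWord C (C.wordTarget a l) s) = ofWord C a (s ++ l) :=
  Mor.ext ((comp_src rfl).trans (wordTarget_append ..).symm) (comp_tgt rfl)
    ((comp_toFun rfl).trans (invMap_append ..).symm)

theorem exists_isReduced (w : Mor C) : ∃ l, IsReduced w l := by
  obtain ⟨l, hl⟩ := w.spec
  exact Nat.sInf_mem (s := {k | ∃ l : List I, Realizes w l ∧ l.length = k}) ⟨_, l, hl, rfl⟩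

theorem len_le {w : Mor C} {l : List I} (h : Realizes w l) : len w ≤ l.length :=
  Nat.sInf_le ⟨l, h, rfl⟩

theorem IsReduced.red {w : Mor C} {l : List I} (h : IsReduced w l) : C.Red w.src l := by
  intro l' hl'
  rw [h.2]
  exact len_le ⟨hl'.1.trans h.1.1, hl'.2.trans h.1.2⟩

theorem len_ofWord {a : A} {l : List I} (h : C.Red a l) : len (ofWord C a l) = l.length := by
  have hr : Realizes (ofWord C a l) l.reverse := ⟨wordTarget_reverse a l, rfl⟩
  refine le_antisymm ((len_le hr).trans_eq l.length_reverse) ?_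
  obtain ⟨l', hl'⟩ := exists_isReduced (ofWord C a l)
  rw [← hl'.2, ← l.length_reverse]
  exact h.reverse l' ⟨hl'.1.1.trans hr.1.symm, hl'.1.2.trans hr.2.symm⟩

theorem weakLe_ofWord {a : A} {s l : List I} (h : C.Red a (s ++ l)) :
    weakLe (ofWord C a l) (ofWord C a (s ++ l)) := by
  refine ⟨ofWord C (C.wordTarget a l) s, rfl, (ofWord_comp a s l).symm, ?_⟩
  rw [len_ofWord h, len_ofWord h.suffix, len_ofWord h.of_append_left, List.length_append, Nat.add_comm]

/-- The letters missing from `J(w)` are those whose coordinate is preserved by `w`. -/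
theorem notMem_Jset_iff (hC : C.IsFRS) {w : Mor C} {i : I} :
    i ∉ Jset w ↔ ∀ x, w.toFun x i = x i := by
  constructor
  · intro h x
    obtain ⟨l, hl⟩ := exists_isReduced w
    rw [← hl.1.2]
    exact wordMap_coord _ _ (fun hi => h ⟨l, hl, hi⟩) x
  · rintro h ⟨l, hl, hi⟩
    exact hl.red.notMem_of_coord hC (fun x => by rw [hl.1.2]; exact h x) hi

theorem Jset_mono {t w : Mor C} (h : weakLe t w) : Jset t ⊆ Jset w := by
  obtain ⟨y, hy, rfl, hlen⟩ := h
  rintro i ⟨l, hl, hi⟩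
  obtain ⟨l', hl'⟩ := exists_isReduced y
  refine ⟨l ++ l', ⟨?_, by rw [List.length_append, hl.2, hl'.2, hlen]⟩,
    List.mem_append_left _ hi⟩
  refine ⟨?_, ?_⟩
  · rw [comp_src hy, comp_tgt hy, wordTarget_append, hl'.1.1, hy, hl.1.1]
  · rw [comp_src hy, comp_toFun hy, wordMap_append, hl'.1.1, hl'.1.2, hy, hl.1.2]

theorem ofWord_append_coord {a : A} {l q : List I} {i : I} (hq : i ∉ q)
    (h : ∀ x, (ofWord C a l).toFun x i = x i) (x : I → ℤ) :
    (ofWord C a (q ++ l)).toFun x i = x i := by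
  change C.invMap a (q ++ l) x i = x i
  rw [invMap_append, Function.comp_apply]
  exact (h _).trans (invMap_coord _ _ hq x)

/-- If `i` is missing from `J(z)`, then `u` and `v = uz` lie in the same coset modulo the
words avoiding `i`. Its minimal representative lies below both `u` and `v`, hence below the meet
`m`; so it preserves the `i`-th coordinate, and so does `u`. -/
theorem notMem_Jset_of_meet (hC : C.IsFRS) {a : A} {u v z m : Mor C} (hu : u.tgt = a)
    (hz : z.tgt = u.src) (hzv : u.comp z = v) (hm : IsMeet a u v m) {i : I}
    (him : i ∉ Jset m) (hiz : i ∉ Jset z) : i ∉ Jset u := by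
  subst hu
  obtain ⟨U, hU, -⟩ := exists_ofWord u
  obtain ⟨Z, hZ, hZr⟩ := exists_ofWord z
  have hiZ : i ∉ Z := by
    refine hZr.notMem_of_coord hC fun x => ?_
    have h1 := (notMem_Jset_iff hC).1 hiz (C.wordMap z.tgt Z x)
    rw [hZ] at h1
    exact h1.symm.trans (congrFun (invMap_wordMap z.tgt Z x) i)
  obtain ⟨l, p, hp, hpe, hq⟩ := exists_coset_min hC u.tgt U i
  have hup : u = ofWord C u.tgt (p ++ l) := hU.trans (ofWord_congr hpe.symm)
  have hsrc : u.src = C.wordTarget u.tgt (p ++ l) := congrArg Mor.src hup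
  have hvp : v = ofWord C u.tgt ((Z ++ p) ++ l) := by
    rw [List.append_assoc, ← ofWord_comp, ← hup, ← hsrc, ← hz, ← hZ, hzv]
  have hle : ∀ q, i ∉ q → weakLe (ofWord C u.tgt l) (ofWord C u.tgt (q ++ l)) := by
    intro q hiq
    obtain ⟨q', -, he, hr⟩ := hq q hiq
    rw [← ofWord_congr he]
    exact weakLe_ofWord hr
  have hxm : weakLe (ofWord C u.tgt l) m := by
    refine hm.2.2.2 _ rfl ?_ ?_
    · have := hle p hp
      rwa [← hup] at this
    · have := hle (Z ++ p) (by simp [hiZ, hp])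
      rwa [← hvp] at this
  have hx := (notMem_Jset_iff hC).1 fun h => him (Jset_mono hxm h)
  rw [notMem_Jset_iff hC, hup]
  exact ofWord_append_coord hp hx

end morphisms

end CartanScheme

/-- `J(u) ∪ J(v) = J(u ∧ v) ∪ J(u⁻¹v)`, where `z = u⁻¹v` is characterized
by `uz = v` and `m = u ∧ v` is the meet in the weak order. -/
theorem Jset_union_meet (C : CartanScheme I A) (hC : C.IsFRS) (a : A)
    (u v z m : Mor C) (hu : u.tgt = a) (hv : v.tgt = a)
    (hz : z.tgt = u.src) (hzv : u.comp z = v) (hm : IsMeet a u v m) :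
    Jset u ∪ Jset v = Jset m ∪ Jset z := by
  have hcomp : v.toFun = u.toFun ∘ z.toFun := by rw [← hzv, comp_toFun hz]
  ext i
  rw [← not_iff_not, Set.mem_union, Set.mem_union, not_or, not_or]
  constructor
  · rintro ⟨hiu, hiv⟩
    refine ⟨fun h => hiu (Jset_mono hm.2.1 h), ?_⟩
    rw [notMem_Jset_iff hC] at *
    intro x
    rw [← hiu (z.toFun x), ← hiv x, hcomp, Function.comp_apply]
  · rintro ⟨him, hiz⟩
    have hiu := notMem_Jset_of_meet hC hu hz hzv hm him hiz
    refine ⟨hiu, ?_⟩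
    rw [notMem_Jset_iff hC] at *
    intro x
    rw [hcomp, Function.comp_apply, hiu, hiz]
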